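/- Let t > 1 be an integer coprime to m, and let D ≥ 1 be an integer such that Σ_{e=1}^D (e−1)·|B_{e,L}| < q^t − q^{t/2+1} (as real numbers). Then there exists a monic irreducible polynomial g of degree t over F such that: (i) g has no roots in GF(q^m); (ii) every nonzero codeword c of C(g^{−1},t) satisfies deg c > D, and hence has Hamming weight w(c) > D/m; in particular the minimum distance of C(g^{−1},t) is greater than D/m. -/

import Mathlib

open Polynomial

noncomputable section

/-- The orbit of `j : ZMod N` under multiplication by `q`. -/
def qOrbit (N q : ℕ) (j : ZMod N) : Set (ZMod N) :=
  Set.range fun k : ℕ => (q : ZMod N) ^ k * j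

/-- The set `L` of orbits of `ZMod N` under multiplication by `q`. -/
def orbitSet (N q : ℕ) : Set (Set (ZMod N)) :=
  {l | ∃ j : ZMod N, l = qOrbit N q j}

/-- `β ^ j` for a residue class `j`. -/
def bpow {E : Type*} [Monoid E] {N : ℕ} (β : E) (j : ZMod N) : E :=
  β ^ j.val

/-- The check-matrix entry `h_{i l} = ∑_{j ∈ l} ρ(β^j) β^{i j}`, as an element of `E`. -/
def hEntry {F E : Type*} [CommSemiring F] [CommSemiring E] [Algebra F E] {N : ℕ}
    (β : E) (ρ : Polynomial F) (i : ℕ) (l : Set (ZMod N)) : E :=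
  ∑ᶠ j ∈ l, Polynomial.aeval (bpow β j) ρ * bpow β j ^ i

/-- The code `C(ρ, t)` inside `F^L`. -/
def codeSet (F E : Type*) [Field F] [Field E] [Algebra F E] (N q : ℕ)
    (β : E) (ρ : Polynomial F) (t : ℕ) : Set (↥(orbitSet N q) → F) :=
  {c | ∀ i < t, ∑ᶠ l : orbitSet N q,
    algebraMap F E (c l) * hEntry β ρ i (l : Set (ZMod N)) = 0}

open scoped Classical in
/-- `deg c = ∑_{l : c_l ≠ 0} |l|`. -/
def wdeg {F : Type*} [Zero F] {N q : ℕ} (c : ↥(orbitSet N q) → F) : ℕ :=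
  ∑ᶠ l : orbitSet N q, if c l ≠ 0 then (l : Set (ZMod N)).ncard else 0

/-- The set `B_{d,L}` of words of degree `d`. -/
def Bset (F : Type*) [Field F] (N q d : ℕ) : Set (↥(orbitSet N q) → F) :=
  {r | wdeg r = d}

/-!
For a word `c` let `P_c` be the numerator of `∑_j c_{[j]} / (X - β ^ j)`, the sum running over the
residue classes `j` whose orbit `[j]` lies in the support of `c`. It is nonzero of degree at most
`deg c - 1` when `c ≠ 0`. If `c ∈ C(g⁻¹, t)` and `a` is a root of `g`, then
`p = g / (X - a)` has degree below `t`, so the parity checks give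
`0 = ∑_j c_{[j]} g(β^j)⁻¹ p(β^j) = ∑_j c_{[j]} / (β^j - a)`: the roots of `g` are roots of `P_c`.
The `P_c` with `0 < deg c ≤ D` have at most `∑_e (e - 1) |B_e|` roots altogether, and fewer than
`q^(⌊t/2⌋ + 1)` elements of `GF(q^t)` have degree over `F` below `t`, so under the counting
hypothesis some `a` of degree `t` is a root of no `P_c`; its minimal polynomial is the required `g`.
-/

section EvaluatorPoly

variable {ι K : Type*} [DecidableEq ι] [Field K] {s : Finset ι} {v b : ι → K}

/-- The error-evaluator polynomial `∑ j ∈ s, v j * ∏ k ∈ s \ {j}, (X - b k)`, i.e. the numerator of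
`∑ j ∈ s, v j / (X - b j)` over the denominator `Lagrange.nodal s b`. It is encoded by its values
`v j * ∏ k ∈ s \ {j}, (b j - b k)` at the nodes, which agrees with the formula when `b` is injective
on `s`. -/
def evaluatorPoly (s : Finset ι) (v b : ι → K) : K[X] :=
  Lagrange.interpolate s b fun j => (Lagrange.nodalWeight s b j)⁻¹ * v j

theorem natDegree_evaluatorPoly_le (hb : Set.InjOn b s) :
    (evaluatorPoly s v b).natDegree ≤ s.card - 1 :=
  natDegree_le_of_degree_le (Lagrange.degree_interpolate_le _ hb)

theorem evaluatorPoly_ne_zero (hb : Set.InjOn b s) {j : ι} (hj : j ∈ s) (hv : v j ≠ 0) :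
    evaluatorPoly s v b ≠ 0 := by
  intro h
  have heval := Lagrange.eval_interpolate_at_node
    (fun j => (Lagrange.nodalWeight s b j)⁻¹ * v j) hb hj
  rw [← evaluatorPoly, h, eval_zero] at heval
  exact mul_ne_zero (inv_ne_zero (Lagrange.nodalWeight_ne_zero hb hj)) hv heval.symm

theorem eval_evaluatorPoly (hb : Set.InjOn b s) {a : K} (ha : ∀ j ∈ s, a ≠ b j) :
    (evaluatorPoly s v b).eval a =
      (Lagrange.nodal s b).eval a * ∑ j ∈ s, v j * (a - b j)⁻¹ := by
  rw [evaluatorPoly, Lagrange.eval_interpolate_not_at_node _ ha]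
  congr 1
  refine Finset.sum_congr rfl fun j hj => ?_
  have := Lagrange.nodalWeight_ne_zero hb hj
  field_simp

theorem sum_mul_eval_eq_zero_of_natDegree_lt {ι R : Type*} [CommSemiring R] {s : Finset ι}
    {w b : ι → R} {n : ℕ} (hw : ∀ i < n, ∑ j ∈ s, w j * b j ^ i = 0) {p : R[X]}
    (hp : p.natDegree < n) : ∑ j ∈ s, w j * p.eval (b j) = 0 := by
  simp only [eval_eq_sum_range' hp, Finset.mul_sum]
  rw [Finset.sum_comm]
  refine Finset.sum_eq_zero fun i hi => ?_
  simp only [mul_left_comm _ (p.coeff i)]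
  rw [← Finset.mul_sum, hw i (Finset.mem_range.1 hi), mul_zero]

theorem isRoot_evaluatorPoly (hb : Set.InjOn b s) {g : K[X]} (hg : g ≠ 0) {r : ι → K}
    (hr : ∀ j ∈ s, g.eval (b j) * r j = 1)
    (hsum : ∀ i < g.natDegree, ∑ j ∈ s, v j * r j * b j ^ i = 0) {a : K} (ha : g.IsRoot a) :
    (evaluatorPoly s v b).IsRoot a := by
  have hne : ∀ j ∈ s, a ≠ b j := by
    rintro j hj rfl
    exact zero_ne_one ((zero_mul (r j)).symm.trans (ha.eq_zero ▸ hr j hj))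
  set p := g /ₘ (X - C a)
  have hp : p.natDegree < g.natDegree := by
    have hpos : 0 < g.natDegree := natDegree_pos_iff_degree_pos.2 (degree_pos_of_root hg ha)
    rw [natDegree_divByMonic g (monic_X_sub_C a), natDegree_X_sub_C]
    exact Nat.sub_lt hpos one_pos
  have hinv : ∀ j ∈ s, (a - b j)⁻¹ = -(r j * p.eval (b j)) := by
    intro j hj
    have hfac : (b j - a) * p.eval (b j) = g.eval (b j) := by
      simpa using congrArg (eval (b j)) (mul_divByMonic_eq_iff_isRoot.2 ha)
    refine inv_eq_of_mul_eq_one_right ?_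
    linear_combination hr j hj + r j * hfac
  rw [IsRoot, eval_evaluatorPoly hb hne]
  calc (Lagrange.nodal s b).eval a * ∑ j ∈ s, v j * (a - b j)⁻¹
      = (Lagrange.nodal s b).eval a * -∑ j ∈ s, v j * r j * p.eval (b j) := by
        rw [← Finset.sum_neg_distrib]
        congr 1
        refine Finset.sum_congr rfl fun j hj => ?_
        rw [hinv j hj]
        ring
    _ = 0 := by rw [sum_mul_eval_eq_zero_of_natDegree_lt hsum hp, neg_zero, mul_zero]

end EvaluatorPoly

section Orbits

variable {N q : ℕ}

theorem self_mem_qOrbit (j : ZMod N) : j ∈ qOrbit N q j :=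
  ⟨0, by simp⟩

theorem qOrbit_subset_of_mem {i j : ZMod N} (h : i ∈ qOrbit N q j) :
    qOrbit N q i ⊆ qOrbit N q j := by
  obtain ⟨k, rfl⟩ := h
  rintro _ ⟨n, rfl⟩
  exact ⟨n + k, by simp only [pow_add, mul_assoc]⟩

theorem mem_qOrbit_symm (hq : IsOfFinOrder (q : ZMod N)) {i j : ZMod N}
    (h : i ∈ qOrbit N q j) : j ∈ qOrbit N q i := by
  obtain ⟨k, rfl⟩ := h
  obtain ⟨n, hn, hqn⟩ := isOfFinOrder_iff_pow_eq_one.1 (hq.pow (n := k))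
  refine ⟨k * (n - 1), ?_⟩
  simp only [pow_mul, ← mul_assoc, pow_sub_one_mul hn.ne', hqn, one_mul]

theorem qOrbit_eq_of_mem (hq : IsOfFinOrder (q : ZMod N)) {i j : ZMod N}
    (h : i ∈ qOrbit N q j) : qOrbit N q i = qOrbit N q j :=
  (qOrbit_subset_of_mem h).antisymm (qOrbit_subset_of_mem (mem_qOrbit_symm hq h))

theorem ncard_qOrbit_le_orderOf (hq : IsOfFinOrder (q : ZMod N)) (j : ZMod N) :
    (qOrbit N q j).ncard ≤ orderOf (q : ZMod N) := by
  classical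
  have hsub : qOrbit N q j ⊆
      ↑((Finset.range (orderOf (q : ZMod N))).image fun k => (q : ZMod N) ^ k * j) := by
    rintro _ ⟨k, rfl⟩
    exact Finset.mem_coe.2 (Finset.mem_image.2 ⟨k % orderOf (q : ZMod N),
      Finset.mem_range.2 (Nat.mod_lt _ hq.orderOf_pos), by rw [pow_mod_orderOf]⟩)
  calc (qOrbit N q j).ncard
      ≤ ((Finset.range (orderOf (q : ZMod N))).image fun k => (q : ZMod N) ^ k * j).card := by
        rw [← Set.ncard_coe_finset]
        exact Set.ncard_le_ncard hsub (Finset.finite_toSet _)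
    _ ≤ orderOf (q : ZMod N) := Finset.card_image_le.trans (Finset.card_range _).le

/-- The orbit of a residue class, as an element of the index set `L`. -/
def toOrbit (N q : ℕ) (j : ZMod N) : orbitSet N q :=
  ⟨qOrbit N q j, j, rfl⟩

theorem toOrbit_eq_iff (hq : IsOfFinOrder (q : ZMod N)) {j : ZMod N} {l : orbitSet N q} :
    toOrbit N q j = l ↔ j ∈ (l : Set (ZMod N)) := by
  refine ⟨fun h => h ▸ self_mem_qOrbit j, fun h => Subtype.ext ?_⟩
  obtain ⟨_, i, rfl⟩ := l
  exact qOrbit_eq_of_mem hq h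

theorem finsum_orbitSet_eq_sum [NeZero N] {M : Type*} [AddCommMonoid M]
    (hq : IsOfFinOrder (q : ZMod N)) (f : orbitSet N q → ZMod N → M) :
    ∑ᶠ l : orbitSet N q, ∑ᶠ j ∈ (l : Set (ZMod N)), f l j =
      ∑ j : ZMod N, f (toOrbit N q j) j := by
  classical
  have : Fintype (orbitSet N q) := Fintype.ofFinite _
  rw [finsum_eq_sum_of_fintype, ← Finset.sum_fiberwise _ (toOrbit N q)]
  refine Finset.sum_congr rfl fun l _ => ?_
  rw [finsum_mem_eq_toFinset_sum]
  refine Finset.sum_congr (Finset.ext fun j => by simp [toOrbit_eq_iff hq]) fun j hj => ?_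
  rw [(Finset.mem_filter.1 hj).2]

end Orbits

section Words

variable {F : Type*} {N q : ℕ}

open scoped Classical in
theorem sum_wdeg_sub_one_eq [Field F] [Fintype (orbitSet N q → F)] (D : ℕ) :
    ∑ c : orbitSet N q → F with wdeg c ∈ Finset.Icc 1 D, (wdeg c - 1) =
      ∑ e ∈ Finset.Icc 1 D, (e - 1) * (Bset F N q e).ncard := by
  rw [← Finset.sum_fiberwise_of_maps_to' (fun c hc => (Finset.mem_filter.1 hc).2) (· - 1)]
  refine Finset.sum_congr rfl fun e he => ?_
  have hfiber : Bset F N q e = ↑(({c | wdeg c ∈ Finset.Icc 1 D} :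
      Finset (orbitSet N q → F)).filter fun c => wdeg c = e) := by
    ext c
    simp only [Finset.coe_filter, Finset.mem_filter, Finset.mem_univ, true_and]
    exact ⟨fun h => ⟨h.symm ▸ he, h⟩, And.right⟩
  rw [hfiber, Set.ncard_coe_finset, Finset.sum_const, smul_eq_mul, mul_comm]

variable [NeZero N]

open scoped Classical in
/-- The residue classes whose orbit lies in the support of the word `c`; there are `wdeg c` of
them. -/
def classSupport [Zero F] (c : orbitSet N q → F) : Finset (ZMod N) :=
  {j | c (toOrbit N q j) ≠ 0}

theorem mem_classSupport [Zero F] {c : orbitSet N q → F} {j : ZMod N} :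
    j ∈ classSupport c ↔ c (toOrbit N q j) ≠ 0 := by
  simp [classSupport]

theorem card_classSupport [Zero F] (hq : IsOfFinOrder (q : ZMod N)) (c : orbitSet N q → F) :
    (classSupport c).card = wdeg c := by
  classical
  rw [classSupport, Finset.card_filter,
    ← finsum_orbitSet_eq_sum hq fun l _ => if c l ≠ 0 then 1 else 0, wdeg]
  refine finsum_congr fun l => ?_
  rw [finsum_mem_eq_finite_toFinset_sum _ (Set.toFinite _), Finset.sum_const,
    ← Set.ncard_eq_toFinset_card, smul_eq_mul, mul_ite, mul_one, mul_zero]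

theorem wdeg_pos_iff [Zero F] (hq : IsOfFinOrder (q : ZMod N)) {c : orbitSet N q → F} :
    0 < wdeg c ↔ c ≠ 0 := by
  rw [← card_classSupport hq, Finset.card_pos, Function.ne_iff]
  constructor
  · rintro ⟨j, hj⟩
    exact ⟨toOrbit N q j, mem_classSupport.1 hj⟩
  · rintro ⟨⟨_, j, rfl⟩, hj⟩
    exact ⟨j, mem_classSupport.2 hj⟩

theorem wdeg_le_orderOf_mul_ncard [Zero F] (hq : IsOfFinOrder (q : ZMod N))
    (c : orbitSet N q → F) :
    wdeg c ≤ orderOf (q : ZMod N) * {l : orbitSet N q | c l ≠ 0}.ncard := by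
  classical
  have : Fintype (orbitSet N q) := Fintype.ofFinite _
  have hsupp : {l : orbitSet N q | c l ≠ 0} = ↑({l | c l ≠ 0} : Finset (orbitSet N q)) := by
    simp
  rw [wdeg, finsum_eq_sum_of_fintype, ← Finset.sum_filter, hsupp, Set.ncard_coe_finset, mul_comm,
    ← smul_eq_mul]
  refine Finset.sum_le_card_nsmul _ _ _ fun l _ => ?_
  obtain ⟨_, j, rfl⟩ := l
  exact ncard_qOrbit_le_orderOf hq j

end Words

section Code

variable {F E : Type*} [Field F] [Field E] [Algebra F E] {N q : ℕ} {β : E}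

theorem aeval_bpow_mul_aeval_bpow_eq_one (hβ : orderOf β = N) {g ρ : F[X]}
    (hρ : X ^ N - 1 ∣ g * ρ - 1) (j : ZMod N) :
    aeval (bpow β j) g * aeval (bpow β j) ρ = 1 := by
  have hroot : aeval (bpow β j) (X ^ N - 1 : F[X]) = 0 := by
    rw [map_sub, map_pow, aeval_X, map_one, bpow, pow_right_comm,
      orderOf_dvd_iff_pow_eq_one.1 hβ.dvd, one_pow, sub_self]
  simpa [sub_eq_zero] using aeval_eq_zero_of_dvd_aeval_eq_zero hρ hroot

variable [NeZero N]

theorem bpow_injective {M : Type*} [Monoid M] {β : M} (hβ : orderOf β = N) :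
    Function.Injective (bpow β : ZMod N → M) := by
  intro i j h
  refine ZMod.val_injective N (pow_injOn_Iio_orderOf ?_ ?_ h) <;>
    simp only [hβ, Set.mem_Iio, ZMod.val_lt]

theorem mem_codeSet_iff_sum (hq : IsOfFinOrder (q : ZMod N)) {ρ : F[X]} {t : ℕ}
    {c : orbitSet N q → F} :
    c ∈ codeSet F E N q β ρ t ↔ ∀ i < t, ∑ j : ZMod N,
      algebraMap F E (c (toOrbit N q j)) * (aeval (bpow β j) ρ * bpow β j ^ i) = 0 := by
  refine forall₂_congr fun i _ => ?_
  simp only [hEntry, mul_finsum_mem]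
  rw [finsum_orbitSet_eq_sum hq fun l j =>
    algebraMap F E (c l) * (aeval (bpow β j) ρ * bpow β j ^ i)]

theorem codeSet_algebraMap {Ω : Type*} [Field Ω] [Algebra F Ω] [Algebra E Ω]
    [IsScalarTower F E Ω] (hq : IsOfFinOrder (q : ZMod N)) (ρ : F[X]) (t : ℕ) :
    codeSet F Ω N q (algebraMap E Ω β) ρ t = codeSet F E N q β ρ t := by
  ext c
  rw [mem_codeSet_iff_sum hq, mem_codeSet_iff_sum hq]
  refine forall₂_congr fun i _ => ?_
  rw [← map_eq_zero (algebraMap E Ω)]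
  simp only [bpow, map_sum, map_mul, map_pow, ← aeval_algebraMap_apply,
    ← IsScalarTower.algebraMap_apply]

/-- The error-evaluator polynomial of the word `c`, with the value `c_l` at every node `β ^ j`,
`j ∈ l`. -/
def wordEvaluator (β : E) (c : orbitSet N q → F) : E[X] :=
  evaluatorPoly (classSupport c) (fun j => algebraMap F E (c (toOrbit N q j))) (bpow β)

theorem natDegree_wordEvaluator_le (hβ : orderOf β = N) (hq : IsOfFinOrder (q : ZMod N))
    (c : orbitSet N q → F) : (wordEvaluator β c).natDegree ≤ wdeg c - 1 :=
  card_classSupport hq c ▸ natDegree_evaluatorPoly_le (bpow_injective hβ).injOn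

theorem wordEvaluator_ne_zero (hβ : orderOf β = N) {c : orbitSet N q → F} (hc : c ≠ 0) :
    wordEvaluator β c ≠ 0 := by
  obtain ⟨⟨_, j, rfl⟩, hj⟩ := Function.ne_iff.1 hc
  exact evaluatorPoly_ne_zero (bpow_injective hβ).injOn (mem_classSupport.2 hj)
    ((_root_.map_ne_zero _).2 hj)

theorem isRoot_wordEvaluator (hβ : orderOf β = N) (hq : IsOfFinOrder (q : ZMod N)) {g ρ : F[X]}
    (hg : g ≠ 0) (hρ : X ^ N - 1 ∣ g * ρ - 1) {c : orbitSet N q → F}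
    (hc : c ∈ codeSet F E N q β ρ g.natDegree) {a : E} (ha : aeval a g = 0) :
    (wordEvaluator β c).IsRoot a := by
  refine isRoot_evaluatorPoly (g := g.map (algebraMap F E)) (bpow_injective hβ).injOn
    (map_ne_zero hg) (r := fun j => aeval (bpow β j) ρ) (fun j _ => ?_) (fun i hi => ?_) ?_
  · rw [eval_map_algebraMap, aeval_bpow_mul_aeval_bpow_eq_one hβ hρ]
  · rw [natDegree_map] at hi
    rw [← (mem_codeSet_iff_sum hq).1 hc i hi]
    simp only [mul_assoc]
    refine Finset.sum_subset (Finset.subset_univ _) fun j _ hj => ?_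
    rw [mem_classSupport, not_not] at hj
    rw [hj, map_zero, zero_mul]
  · rwa [IsRoot, eval_map_algebraMap]

end Code

section FiniteField

variable {F : Type*} [Field F]

theorem natDegree_dvd_finrank_of_aeval_eq_zero {E : Type*} [Field E] [Algebra F E] {g : F[X]}
    (hg : Irreducible g) {y : E} (hy : aeval y g = 0) :
    g.natDegree ∣ Module.finrank F E := by
  have hint : IsIntegral F y := isAlgebraic_iff_isIntegral.1 ⟨g, hg.ne_zero, hy⟩
  rw [minpoly.Irreducible.eq_minpoly hg hy, natDegree_C_mul (leadingCoeff_ne_zero.2 hg.ne_zero)]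
  exact minpoly.degree_dvd hint

theorem natDegree_minpoly_le_finrank_div_two {K : Type*} [Field K] [Algebra F K]
    [FiniteDimensional F K] {x : K} (hx : (minpoly F x).natDegree ≠ Module.finrank F K) :
    (minpoly F x).natDegree ≤ Module.finrank F K / 2 := by
  obtain ⟨k, hk⟩ := minpoly.degree_dvd (Algebra.IsIntegral.isIntegral (R := F) x)
  have hk0 : k ≠ 0 := by
    rintro rfl
    exact Module.finrank_pos.ne' (by simpa using hk)
  have hk1 : k ≠ 1 := by
    rintro rfl
    exact hx (by simpa using hk.symm)
  rw [Nat.le_div_iff_mul_le two_pos, hk]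
  exact Nat.mul_le_mul_left _ (by omega)

variable [Finite F]

theorem isRoot_X_pow_card_pow_natDegree_minpoly_sub_X {K : Type*} [Field K] [Algebra F K] {x : K}
    (hx : IsIntegral F x) :
    (X ^ Nat.card F ^ (minpoly F x).natDegree - X : K[X]).IsRoot x := by
  have hdvd : minpoly F x ∣ X ^ Nat.card F ^ (minpoly F x).natDegree - X :=
    (minpoly.irreducible hx).natDegree_dvd_iff_dvd_X_pow_card_pow_sub_X.1 dvd_rfl
  simpa using aeval_eq_zero_of_dvd_aeval_eq_zero hdvd (minpoly.aeval F x)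

theorem ncard_natDegree_minpoly_le_lt {K : Type*} [Field K] [Algebra F K]
    [Algebra.IsAlgebraic F K] (n : ℕ) :
    {x : K | (minpoly F x).natDegree ≤ n}.ncard < Nat.card F ^ (n + 1) := by
  classical
  set q := Nat.card F
  have hq : 1 < q := Finite.one_lt_card
  have hsub : {x : K | (minpoly F x).natDegree ≤ n} ⊆
      ↑((Finset.Icc 1 n).biUnion fun d => (X ^ q ^ d - X : K[X]).roots.toFinset) := by
    intro x hx
    have hint : IsIntegral F x := Algebra.IsIntegral.isIntegral x
    have hpos := minpoly.natDegree_pos hint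
    simp only [Finset.coe_biUnion, Set.mem_iUnion, Finset.mem_coe, Multiset.mem_toFinset]
    refine ⟨(minpoly F x).natDegree, Finset.mem_Icc.2 ⟨hpos, hx⟩, ?_⟩
    rw [mem_roots (FiniteField.X_pow_card_pow_sub_X_ne_zero K hpos.ne' hq)]
    exact isRoot_X_pow_card_pow_natDegree_minpoly_sub_X hint
  calc {x : K | (minpoly F x).natDegree ≤ n}.ncard
      ≤ ((Finset.Icc 1 n).biUnion fun d => (X ^ q ^ d - X : K[X]).roots.toFinset).card := by
        rw [← Set.ncard_coe_finset]
        exact Set.ncard_le_ncard hsub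
    _ ≤ ∑ d ∈ Finset.Icc 1 n, (X ^ q ^ d - X : K[X]).roots.toFinset.card :=
        Finset.card_biUnion_le
    _ ≤ ∑ d ∈ Finset.Icc 1 n, q ^ d := Finset.sum_le_sum fun d hd => by
        have hd0 : d ≠ 0 := Nat.one_le_iff_ne_zero.1 (Finset.mem_Icc.1 hd).1
        exact (Multiset.toFinset_card_le _).trans ((card_roots' _).trans
          (FiniteField.X_pow_card_pow_sub_X_natDegree_eq K hd0 hq).le)
    _ < q ^ (n + 1) := Nat.geomSum_lt hq fun d hd => Nat.lt_succ_of_le (Finset.mem_Icc.1 hd).2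

theorem ncard_preimage_isRoot_le {K L : Type*} [Field L] {P : L[X]} (hP : P ≠ 0) {φ : K → L}
    (hφ : Function.Injective φ) : {x : K | P.IsRoot (φ x)}.ncard ≤ P.natDegree := by
  classical
  calc {x : K | P.IsRoot (φ x)}.ncard ≤ (P.roots.toFinset : Set L).ncard :=
        Set.ncard_le_ncard_of_injOn φ (fun x hx => by simpa [hP] using hx) hφ.injOn
    _ = P.roots.toFinset.card := Set.ncard_coe_finset _
    _ ≤ P.natDegree := (Multiset.toFinset_card_le _).trans (card_roots' P)

theorem exists_natDegree_minpoly_eq_finrank_not_isRoot {K L : Type*} [Field K] [Field L]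
    [Algebra F K] [FiniteDimensional F K] (φ : K →+* L) {P : L[X]} (hP : P ≠ 0)
    (hcard : P.natDegree + Nat.card F ^ (Module.finrank F K / 2 + 1) ≤
      Nat.card F ^ Module.finrank F K) :
    ∃ x : K, (minpoly F x).natDegree = Module.finrank F K ∧ ¬ P.IsRoot (φ x) := by
  have : Finite K := Module.finite_of_finite F
  set bad : Set K := {x | P.IsRoot (φ x)} ∪
    {x | (minpoly F x).natDegree ≤ Module.finrank F K / 2}
  have hbad : bad.ncard < (Set.univ : Set K).ncard := by
    rw [Set.ncard_univ, Module.natCard_eq_pow_finrank (K := F)]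
    calc bad.ncard ≤ _ := Set.ncard_union_le _ _
      _ < P.natDegree + Nat.card F ^ (Module.finrank F K / 2 + 1) :=
        add_lt_add_of_le_of_lt (ncard_preimage_isRoot_le hP φ.injective)
          (ncard_natDegree_minpoly_le_lt _)
      _ ≤ Nat.card F ^ Module.finrank F K := hcard
  obtain ⟨x, -, hx⟩ := Set.exists_mem_notMem_of_ncard_lt_ncard hbad
  rw [Set.mem_union, not_or] at hx
  exact ⟨x, not_imp_comm.1 natDegree_minpoly_le_finrank_div_two hx.2, hx.1⟩

theorem exists_natDegree_minpoly_eq_not_isRoot {L : Type*} [Field L] [IsAlgClosed L]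
    [Algebra F L] {P : L[X]} (hP : P ≠ 0) {t : ℕ}
    (hcard : P.natDegree + Nat.card F ^ (t / 2 + 1) ≤ Nat.card F ^ t) :
    ∃ a : L, IsIntegral F a ∧ (minpoly F a).natDegree = t ∧ ¬ P.IsRoot a := by
  have ht : t / 2 + 1 ≤ t :=
    (Nat.pow_le_pow_iff_right Finite.one_lt_card).1 (le_of_add_le_right hcard)
  have : NeZero t := ⟨by omega⟩
  obtain ⟨p, _⟩ := CharP.exists F
  have : Fact p.Prime := ⟨CharP.char_is_prime F p⟩
  let K := FiniteField.Extension F p t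
  let φ : K →ₐ[F] L := IsAlgClosed.lift
  have hK : Module.finrank F K = t := FiniteField.finrank_extension F p t
  obtain ⟨x, hx, hroot⟩ := exists_natDegree_minpoly_eq_finrank_not_isRoot (F := F) (φ : K →+* L) hP
    (hK.symm ▸ hcard)
  refine ⟨φ x, (Algebra.IsIntegral.isIntegral x).map φ, ?_, hroot⟩
  rw [minpoly.algHom_eq φ φ.injective, hx, hK]

theorem natCast_card_pow_finrank_eq_one {E : Type*} [Field E] [Algebra F E]
    [FiniteDimensional F E] {N : ℕ} [NeZero N] {β : E} (hβ : orderOf β = N) :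
    (Nat.card F : ZMod N) ^ Module.finrank F E = 1 := by
  have : Finite E := Module.finite_of_finite F
  have := Fintype.ofFinite E
  have hβ0 : β ≠ 0 := by
    rintro rfl
    exact NeZero.ne N (hβ.symm.trans (orderOf_zero E))
  have hdvd : N ∣ Nat.card E - 1 := by
    rw [← hβ, orderOf_dvd_iff_pow_eq_one, Nat.card_eq_fintype_card]
    exact FiniteField.pow_card_sub_one_eq_one β hβ0
  rw [← Nat.cast_pow, ← Module.natCard_eq_pow_finrank, ← Nat.sub_add_cancel Nat.card_pos,
    Nat.cast_add, (ZMod.natCast_eq_zero_iff _ _).2 hdvd, zero_add, Nat.cast_one]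

end FiniteField

theorem exists_natDegree_minpoly_eq_forall_not_isRoot_wordEvaluator {F L : Type*} [Field F]
    [Finite F] [Field L] [IsAlgClosed L] [Algebra F L] {N q : ℕ} [NeZero N] {β : L}
    (hβ : orderOf β = N) (hq : IsOfFinOrder (q : ZMod N)) {t D : ℕ}
    (hcount : ∑ e ∈ Finset.Icc 1 D, (e - 1) * (Bset F N q e).ncard + Nat.card F ^ (t / 2 + 1) ≤
      Nat.card F ^ t) :
    ∃ a : L, IsIntegral F a ∧ (minpoly F a).natDegree = t ∧
      ∀ c : orbitSet N q → F, c ≠ 0 → wdeg c ≤ D → ¬ (wordEvaluator β c).IsRoot a := by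
  classical
  have := Fintype.ofFinite (orbitSet N q → F)
  set words : Finset (orbitSet N q → F) := {c | wdeg c ∈ Finset.Icc 1 D}
  have hmem : ∀ c, c ∈ words ↔ c ≠ 0 ∧ wdeg c ≤ D := fun c => by
    simp only [words, Finset.mem_filter, Finset.mem_univ, true_and, Finset.mem_Icc,
      Nat.one_le_iff_ne_zero, ← Nat.pos_iff_ne_zero, wdeg_pos_iff hq]
  have hne : ∀ c ∈ words, wordEvaluator β c ≠ 0 :=
    fun c hc => wordEvaluator_ne_zero hβ ((hmem c).1 hc).1
  have hdeg : (∏ c ∈ words, wordEvaluator β c).natDegree ≤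
      ∑ e ∈ Finset.Icc 1 D, (e - 1) * (Bset F N q e).ncard := by
    rw [natDegree_prod _ _ hne, ← sum_wdeg_sub_one_eq]
    exact Finset.sum_le_sum fun c _ => natDegree_wordEvaluator_le hβ hq c
  obtain ⟨a, hint, hat, hroot⟩ := exists_natDegree_minpoly_eq_not_isRoot
    (Finset.prod_ne_zero_iff.2 hne) ((Nat.add_le_add_right hdeg _).trans hcount)
  refine ⟨a, hint, hat, fun c hc hD hca => hroot ?_⟩
  rw [IsRoot, eval_prod]
  exact Finset.prod_eq_zero ((hmem c).2 ⟨hc, hD⟩) hca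

theorem sum_sub_one_mul_add_pow_le_of_lt_sub_rpow {q t D : ℕ} (hq : 0 < q) (B : ℕ → ℕ)
    (h : ∑ e ∈ Finset.Icc 1 D, ((e : ℝ) - 1) * (B e : ℝ) <
      (q : ℝ) ^ t - (q : ℝ) ^ ((t : ℝ) / 2 + 1)) :
    ∑ e ∈ Finset.Icc 1 D, (e - 1) * B e + q ^ (t / 2 + 1) ≤ q ^ t := by
  have hcast : ((∑ e ∈ Finset.Icc 1 D, (e - 1) * B e : ℕ) : ℝ) =
      ∑ e ∈ Finset.Icc 1 D, ((e : ℝ) - 1) * (B e : ℝ) := by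
    rw [Nat.cast_sum]
    refine Finset.sum_congr rfl fun e he => ?_
    rw [Nat.cast_mul, Nat.cast_sub (Finset.mem_Icc.1 he).1, Nat.cast_one]
  have hpow : (q : ℝ) ^ (t / 2 + 1) ≤ (q : ℝ) ^ ((t : ℝ) / 2 + 1) := by
    rw [← Real.rpow_natCast]
    refine Real.rpow_le_rpow_of_exponent_le (Nat.one_le_cast.2 hq) ?_
    rw [Nat.cast_add, Nat.cast_one]
    exact add_le_add_left Nat.cast_div_le _
  have : ((∑ e ∈ Finset.Icc 1 D, (e - 1) * B e : ℕ) : ℝ) + (q : ℝ) ^ (t / 2 + 1) ≤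
      (q : ℝ) ^ t := by
    linarith
  exact_mod_cast this

theorem existence_gilbert_general {F E : Type*} [Field F] [Finite F] [Field E] [Algebra F E]
    [FiniteDimensional F E] {N : ℕ} [NeZero N] {β : E} (hβ : orderOf β = N) {t D : ℕ}
    (ht : ¬ t ∣ Module.finrank F E)
    (hcount : ∑ e ∈ Finset.Icc 1 D, (e - 1) * (Bset F N (Nat.card F) e).ncard +
      Nat.card F ^ (t / 2 + 1) ≤ Nat.card F ^ t) :
    ∃ g : F[X], g.Monic ∧ Irreducible g ∧ g.natDegree = t ∧ (∀ x : E, aeval x g ≠ 0) ∧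
      ∀ ρ : F[X], X ^ N - 1 ∣ g * ρ - 1 →
        ∀ c ∈ codeSet F E N (Nat.card F) β ρ t, c ≠ 0 →
          D < wdeg c ∧ (D : ℝ) / Module.finrank F E < ({l | c l ≠ 0}.ncard : ℝ) := by
  have hqm : (Nat.card F : ZMod N) ^ Module.finrank F E = 1 := natCast_card_pow_finrank_eq_one hβ
  have hm : 0 < Module.finrank F E := Module.finrank_pos
  have hq : IsOfFinOrder (Nat.card F : ZMod N) := isOfFinOrder_iff_pow_eq_one.2 ⟨_, hm, hqm⟩
  let Ω := AlgebraicClosure E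
  have hβΩ : orderOf (algebraMap E Ω β) = N :=
    (orderOf_injective _ (algebraMap E Ω).injective β).trans hβ
  obtain ⟨a, hint, rfl, havoid⟩ :=
    exists_natDegree_minpoly_eq_forall_not_isRoot_wordEvaluator hβΩ hq hcount
  have hirr : Irreducible (minpoly F a) := minpoly.irreducible hint
  refine ⟨minpoly F a, minpoly.monic hint, hirr, rfl,
    fun x hx => ht (natDegree_dvd_finrank_of_aeval_eq_zero hirr hx), fun ρ hρ c hc hc0 => ?_⟩
  have hD : D < wdeg c := by
    by_contra! hle
    rw [← codeSet_algebraMap (Ω := Ω) hq] at hc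
    exact havoid c hc0 hle (isRoot_wordEvaluator hβΩ hq hirr.ne_zero hρ hc (minpoly.aeval F a))
  have hweight : wdeg c ≤ Module.finrank F E * {l | c l ≠ 0}.ncard :=
    (wdeg_le_orderOf_mul_ncard hq c).trans
      (Nat.mul_le_mul_right _ (orderOf_le_of_pow_eq_one hm hqm))
  refine ⟨hD, (div_lt_iff₀' (Nat.cast_pos.2 hm)).2 ?_⟩
  exact_mod_cast hD.trans_le hweight

/-- Existence theorem: if `t > 1` is coprime to `m` and
`∑_{e=1}^D (e−1)|B_{e,L}| < q^t − q^{t/2+1}`, then there is a monic irreducible `g` of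
degree `t` over `F` with no roots in `GF(q^m)` such that every nonzero codeword `c` of
`C(g⁻¹,t)` has `deg c > D`, hence Hamming weight `w(c) > D/m`; in particular the minimum
distance of `C(g⁻¹,t)` exceeds `D/m`. -/
theorem existence_gilbert (q m : ℕ) (hm : 0 < m) (hqm : Nat.Coprime q m)
    (F E : Type*) [Field F] [Field E] [Fintype F] [Fintype E] [Algebra F E]
    (hF : Fintype.card F = q) (hE : Fintype.card E = q ^ m)
    (β : E) (hβ : orderOf β = q ^ m - 1) (t : ℕ) (ht : 1 < t) (htm : Nat.Coprime t m)
    (D : ℕ) (hD : 0 < D)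
    (hsum : ∑ e ∈ Finset.Icc 1 D,
        ((e : ℝ) - 1) * ((Bset F (q ^ m - 1) q e).ncard : ℝ) <
      (q : ℝ) ^ t - (q : ℝ) ^ ((t : ℝ) / 2 + 1)) :
    ∃ g : Polynomial F, g.Monic ∧ Irreducible g ∧ g.natDegree = t ∧
      (∀ x : E, Polynomial.aeval x g ≠ 0) ∧
      ∀ ginv : Polynomial F, ginv.degree < ((q ^ m - 1 : ℕ) : WithBot ℕ) →
        ((X : Polynomial F) ^ (q ^ m - 1) - 1 ∣ g * ginv - 1) →
        ∀ c ∈ codeSet F E (q ^ m - 1) q β ginv t, c ≠ 0 →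
          D < wdeg c ∧
          (D : ℝ) / m < (({l : ↥(orbitSet (q ^ m - 1) q) | c l ≠ 0}).ncard : ℝ) := by
  obtain rfl : Nat.card F = q := Nat.card_eq_fintype_card.trans hF
  obtain rfl : Module.finrank F E = m := Nat.pow_right_injective Finite.one_lt_card
    (Module.natCard_eq_pow_finrank.symm.trans (Nat.card_eq_fintype_card.trans hE))
  have : NeZero (Nat.card F ^ Module.finrank F E - 1) :=
    ⟨(Nat.sub_pos_of_lt (Nat.one_lt_pow hm.ne' Finite.one_lt_card)).ne'⟩
  obtain ⟨g, hmonic, hirr, hdeg, hroots, hcode⟩ := existence_gilbert_general hβ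
    (fun hdvd => ht.ne' (htm.eq_one_of_dvd hdvd))
    (sum_sub_one_mul_add_pow_le_of_lt_sub_rpow Nat.card_pos _ hsum)
  exact ⟨g, hmonic, hirr, hdeg, hroots, fun ginv _ => hcode ginv⟩
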